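/- Let n ≥ 3 be an odd integer and ε > 0. There exists a constant c > 0 depending only on n and ε such that: for every real-split central division ℚ-algebra A of degree n, every order 𝒪 ⊆ A, every z ∈ GL_n(ℝ), every real L ≥ 1, and every δ with 0 < δ ≤ c·L^{-2-ε}, the ℚ-subalgebra of A generated by ⋃_{1≤m≤L} 𝒪(m; z, δ) is commutative (hence a field). -/

import Mathlib

open Matrix

/-- `IsSO k` : `k ∈ SO(n)`. -/
def IsSO {n : ℕ} (k : Matrix (Fin n) (Fin n) ℝ) : Prop :=
  kᵀ * k = 1 ∧ k.det = 1

/-- An order in a `ℚ`-algebra: a subring which is finitely generated as a `ℤ`-module and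
contains a `ℚ`-basis of the algebra. -/
def IsOrder (A : Type*) [Ring A] [Algebra ℚ A] (O : Subring A) : Prop :=
  O.toAddSubgroup.FG ∧ Submodule.span ℚ (O : Set A) = ⊤

/-- The set `𝒪(m; z, δ)`. -/
noncomputable def OSet {n : ℕ} {A : Type*} [DivisionRing A] [CharZero A]
    (ι : A →ₐ[ℚ] Matrix (Fin n) (Fin n) ℝ) (O : Subring A)
    (z : Matrix.GeneralLinearGroup (Fin n) ℝ) (m : ℕ) (δ : ℝ) : Set A :=
  {γ | γ ∈ O ∧ (ι γ).det = (m : ℝ) ∧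
    ∃ k : Matrix (Fin n) (Fin n) ℝ, IsSO k ∧
      ∀ i j, |(((m : ℝ) ^ (-(1 : ℝ) / (n : ℝ))) •
        ((↑z⁻¹ : Matrix (Fin n) (Fin n) ℝ) * ι γ * (↑z : Matrix (Fin n) (Fin n) ℝ)) - k) i j| < δ}


theorem aux_indep {A : Type} [DivisionRing A] [CharZero A] {n : ℕ}
    (ι : A →ₐ[ℚ] Matrix (Fin n) (Fin n) ℝ) (hn : 0 < n)
    (hc : Subalgebra.center ℚ A = ⊥) {κ : Type} (r : κ → ℝ) (hr : LinearIndependent ℚ r)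
    (s : Finset κ) : ∀ a : κ → A, ∑ i ∈ s, r i • ι (a i) = 0 → ∀ i ∈ s, a i = 0 := by
  classical
  induction s using Finset.induction_on with
  | empty => intro a _ i hi; simp at hi
  | insert j t hj ih =>
    intro a ha
    by_cases haj : a j = 0
    · rw [Finset.sum_insert hj, haj, map_zero, smul_zero, zero_add] at ha
      intro i hi
      rcases Finset.mem_insert.1 hi with rfl | hi
      · exact haj
      · exact ih a ha i hi
    · exfalso
      set a' : κ → A := fun i => (a j)⁻¹ * a i with ha'
      have h1 : a' j = 1 := by simp [ha', haj]
      have h2 : ∑ i ∈ insert j t, r i • ι (a' i) = 0 := by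
        have := congrArg (fun M => ι (a j)⁻¹ * M) ha
        simpa [ha', Finset.mul_sum] using this
      have h3 : ∀ b : A, ∀ i ∈ t, b * a' i - a' i * b = 0 := by
        intro b
        apply ih (fun i => b * a' i - a' i * b)
        have e1 := congrArg (fun M => ι b * M - M * ι b) h2
        simp only [Finset.mul_sum, Finset.sum_mul, mul_zero, zero_mul, sub_zero,
          ← Finset.sum_sub_distrib] at e1
        rw [Finset.sum_insert hj, h1] at e1
        simpa [smul_sub] using e1
      have h4 : ∀ i ∈ insert j t, ∃ q : ℚ, algebraMap ℚ A q = a' i := by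
        intro i hi
        rcases Finset.mem_insert.1 hi with rfl | hi
        · exact ⟨1, by rw [h1, map_one]⟩
        · have : a' i ∈ Subalgebra.center ℚ A := by
            rw [Subalgebra.mem_center_iff]
            intro b
            exact sub_eq_zero.1 (h3 b i hi)
          rw [hc] at this
          exact Algebra.mem_bot.1 this
      choose! q hq using h4
      have h5 : ∑ i ∈ insert j t, q i • r i = 0 := by
        have e := congrFun (congrFun h2 ⟨0, hn⟩) ⟨0, hn⟩
        rw [Matrix.sum_apply] at e
        rw [← Matrix.zero_apply (m := Fin n) (n := Fin n) (α := ℝ) ⟨0, hn⟩ ⟨0, hn⟩, ← e]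
        apply Finset.sum_congr rfl
        intro i hi
        rw [← hq i hi, AlgHom.commutes]
        simp [Matrix.algebraMap_matrix_apply, Rat.smul_def, mul_comm]
      have h6 := linearIndependent_iff'.1 hr _ _ h5 j (Finset.mem_insert_self _ _)
      have := hq j (Finset.mem_insert_self _ _)
      rw [h6, h1] at this
      simp at this

theorem aux_li {A : Type} [DivisionRing A] [CharZero A] {n : ℕ}
    (ι : A →ₐ[ℚ] Matrix (Fin n) (Fin n) ℝ) (hn : 0 < n)
    (hc : Subalgebra.center ℚ A = ⊥) {κ : Type} [Fintype κ] (b : κ → A)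
    (hb : LinearIndependent ℚ b) : LinearIndependent ℝ (fun i => ι (b i)) := by
  classical
  rw [Fintype.linearIndependent_iff]
  intro s hs
  let R := Module.Basis.ofVectorSpace ℚ ℝ
  let T := Finset.univ.biUnion (fun i => (R.repr (s i)).support)
  have hsi : ∀ i, s i = ∑ k ∈ T, R.repr (s i) k • R k := by
    intro i
    conv_lhs => rw [← R.linearCombination_repr (s i), Finsupp.linearCombination_apply, Finsupp.sum]
    apply Finset.sum_subset
    · exact Finset.subset_biUnion_of_mem (fun i => (R.repr (s i)).support) (Finset.mem_univ i)
    · intro k _ hk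
      rw [Finsupp.notMem_support_iff.1 hk, zero_smul]
  have h1 : ∑ k ∈ T, R k • ι (∑ i, R.repr (s i) k • b i) = 0 := by
    rw [← hs]
    simp only [map_sum, Finset.smul_sum]
    rw [Finset.sum_comm]
    apply Finset.sum_congr rfl
    intro i _
    conv_rhs => rw [hsi i, Finset.sum_smul]
    apply Finset.sum_congr rfl
    intro k _
    rw [map_smul]
    ext p q
    simp [Rat.smul_def]
    ring
  have h2 := aux_indep ι hn hc R R.linearIndependent T _ h1
  intro i
  rw [hsi i]
  apply Finset.sum_eq_zero
  intro k hk
  rw [Fintype.linearIndependent_iff.1 hb _ (h2 k hk) i, zero_smul]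

theorem aux_prod {κ : Type} (s : Finset κ) (a b : κ → ℝ) (B η : ℝ) (hB : 1 ≤ B) (hη : 0 ≤ η)
    (ha : ∀ i, |a i| ≤ B) (hb : ∀ i, |b i| ≤ B) (hab : ∀ i, |a i - b i| ≤ η) :
    |∏ i ∈ s, a i - ∏ i ∈ s, b i| ≤ s.card * B ^ s.card * η := by
  classical
  induction s using Finset.induction_on with
  | empty => simp
  | insert j t hj ih =>
    rw [Finset.prod_insert hj, Finset.prod_insert hj, Finset.card_insert_of_notMem hj]
    have hP : |∏ i ∈ t, b i| ≤ B ^ t.card := by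
      rw [Finset.abs_prod]
      refine (Finset.prod_le_prod (fun i _ => abs_nonneg _) (fun i _ => hb i)).trans ?_
      simp
    have e : a j * ∏ i ∈ t, a i - b j * ∏ i ∈ t, b i =
      a j * (∏ i ∈ t, a i - ∏ i ∈ t, b i) + (a j - b j) * ∏ i ∈ t, b i := by ring
    rw [e]
    refine (abs_add_le _ _).trans ?_
    rw [abs_mul, abs_mul]
    have h1 : |a j| * |∏ i ∈ t, a i - ∏ i ∈ t, b i| ≤ B * (t.card * B ^ t.card * η) :=
      mul_le_mul (ha j) ih (abs_nonneg _) (by linarith)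
    have h2 : |a j - b j| * |∏ i ∈ t, b i| ≤ η * B ^ t.card :=
      mul_le_mul (hab j) hP (abs_nonneg _) hη
    have h3 : η * B ^ t.card ≤ η * B ^ (t.card + 1) := by
      exact mul_le_mul_of_nonneg_left (pow_le_pow_right₀ hB (Nat.le_succ _)) hη
    push_cast
    calc _ ≤ B * (t.card * B ^ t.card * η) + η * B ^ (t.card + 1) := by linarith
      _ = _ := by ring

theorem aux_det {n : ℕ} (M N : Matrix (Fin n) (Fin n) ℝ) (B η : ℝ) (hB : 1 ≤ B) (hη : 0 ≤ η)
    (ha : ∀ i j, |M i j| ≤ B) (hb : ∀ i j, |N i j| ≤ B) (hab : ∀ i j, |M i j - N i j| ≤ η) :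
    |M.det - N.det| ≤ n.factorial * (n * B ^ n * η) := by
  rw [Matrix.det_apply', Matrix.det_apply', ← Finset.sum_sub_distrib]
  refine (Finset.abs_sum_le_sum_abs _ _).trans ?_
  have : ∀ σ ∈ (Finset.univ : Finset (Equiv.Perm (Fin n))),
      |((Equiv.Perm.sign σ : ℤ) : ℝ) * ∏ i, M (σ i) i - ((Equiv.Perm.sign σ : ℤ) : ℝ) * ∏ i, N (σ i) i|
       ≤ n * B ^ n * η := by
    intro σ _
    rw [← mul_sub, abs_mul]
    have : |((Equiv.Perm.sign σ : ℤ) : ℝ)| = 1 := by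
      rcases Int.units_eq_one_or (Equiv.Perm.sign σ) with h | h <;> simp [h]
    rw [this, one_mul]
    simpa using aux_prod Finset.univ (fun i => M (σ i) i) (fun i => N (σ i) i) B η hB hη
      (fun i => ha _ _) (fun i => hb _ _) (fun i => hab _ _)
  refine (Finset.sum_le_card_nsmul _ _ _ this).trans ?_
  simp [Fintype.card_perm]

theorem aux_mulLeft {n : ℕ} (X : Matrix (Fin n) (Fin n) ℝ) :
    LinearMap.det (LinearMap.mulLeft ℝ X) = X.det ^ n := by
  have h := LinearMap.det_conj (LinearMap.mulLeft ℝ X)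
    ((Matrix.transposeLinearEquiv (Fin n) (Fin n) ℝ ℝ).trans (Matrix.ofLinearEquiv ℝ).symm)
  rw [← h]
  have e : ((((Matrix.transposeLinearEquiv (Fin n) (Fin n) ℝ ℝ).trans (Matrix.ofLinearEquiv ℝ).symm) : Matrix (Fin n) (Fin n) ℝ →ₗ[ℝ] _) ∘ₗ LinearMap.mulLeft ℝ X ∘ₗ
     (((Matrix.transposeLinearEquiv (Fin n) (Fin n) ℝ ℝ).trans (Matrix.ofLinearEquiv ℝ).symm).symm : (Fin n → Fin n → ℝ) →ₗ[ℝ] _)) =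
     LinearMap.pi (fun i => (Matrix.toLin' X) ∘ₗ LinearMap.proj i) := by
    ext i j k l
    simp [Matrix.mul_apply, Matrix.mulVec, dotProduct, mul_comm]
  rw [e, LinearMap.det_pi]
  simp

theorem aux_int {A : Type} [DivisionRing A] [CharZero A] {n : ℕ}
    (ι : A →ₐ[ℚ] Matrix (Fin n) (Fin n) ℝ) (hn : 0 < n)
    (hc : Subalgebra.center ℚ A = ⊥) (hd : Module.finrank ℚ A = n ^ 2)
    (O : Subring A) (hO : O.toAddSubgroup.FG ∧ Submodule.span ℚ (O : Set A) = ⊤)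
    (x : A) (hx : x ∈ O) : ∃ d : ℤ, (ι x).det ^ n = d := by
  classical
  have : Module.Finite ℤ O := by
    have h := (AddGroup.fg_iff_addSubgroup_fg _).2 hO.1
    exact Module.Finite.iff_addGroup_fg.2 h
  have : IsAddTorsionFree A := inferInstance
  have : Module.IsTorsionFree ℤ O := inferInstance
  have : Module.Free ℤ O := inferInstance
  let b := Module.Free.chooseBasis ℤ O
  let v : Module.Free.ChooseBasisIndex ℤ O → A := fun i => (b i : A)
  have hv : LinearIndependent ℚ v := by
    rw [← LinearIndependent.iff_fractionRing ℤ ℚ]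
    have := b.linearIndependent.map' (O.subtype.toAddMonoidHom.toIntLinearMap)
      (LinearMap.ker_eq_bot.2 Subtype.val_injective)
    exact this
  have hsp : ⊤ ≤ Submodule.span ℚ (Set.range v) := by
    rw [← hO.2, Submodule.span_le]
    intro y hy
    have := b.sum_repr ⟨y, hy⟩
    have := congrArg (Subtype.val) this
    simp only [AddSubmonoidClass.coe_finsetSum] at this
    rw [← show _ = y from this]
    apply Submodule.sum_mem
    intro i _
    have : ((b.repr ⟨y, hy⟩ i • b i : O) : A) = ((b.repr ⟨y, hy⟩ i : ℤ) : ℚ) • v i := by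
      simp [v, Int.cast_smul_eq_zsmul]
    rw [this]
    exact Submodule.smul_mem _ _ (Submodule.subset_span ⟨i, rfl⟩)
  let bQ := Module.Basis.mk hv hsp
  have hcard : Fintype.card (Module.Free.ChooseBasisIndex ℤ O) = n ^ 2 := by
    rw [← hd, Module.finrank_eq_card_basis bQ]
  have hli := aux_li ι hn hc v hv
  have : Nonempty (Module.Free.ChooseBasisIndex ℤ O) := by
    rw [← Fintype.card_pos_iff, hcard]; positivity
  let e := basisOfLinearIndependentOfCardEqFinrank hli (by
    rw [hcard, Module.finrank_matrix]; simp [sq])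
  have he : ∀ i, e i = ι (v i) := fun i => by simp [e]
  let C := LinearMap.toMatrix b b (LinearMap.mulLeft ℤ (⟨x, hx⟩ : O))
  refine ⟨C.det, ?_⟩
  rw [← aux_mulLeft, ← LinearMap.det_toMatrix e]
  have : LinearMap.toMatrix e e (LinearMap.mulLeft ℝ (ι x)) = C.map (Int.castRingHom ℝ) := by
    ext i j
    rw [LinearMap.toMatrix_apply, LinearMap.mulLeft_apply, he, ← map_mul]
    have h1 := b.sum_repr (⟨x, hx⟩ * b j)
    have h2 := congrArg (Subtype.val) h1
    simp only [AddSubmonoidClass.coe_finsetSum] at h2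
    have h3 : ι (x * v j) = ∑ i, ((b.repr (⟨x, hx⟩ * b j) i : ℤ) : ℝ) • e i := by
      rw [show x * v j = _ from h2.symm, map_sum]
      apply Finset.sum_congr rfl
      intro i _
      rw [he, Int.cast_smul_eq_zsmul]
      simp [v]
    rw [h3, e.repr_sum_self]
    have h4 : C i j = b.repr (⟨x, hx⟩ * b j) i := by
      unfold C
      rw [LinearMap.toMatrix_apply, LinearMap.mulLeft_apply]
    rw [Matrix.map_apply, h4]
    rfl
  rw [this]
  exact (RingHom.map_det (Int.castRingHom ℝ) C).symm

theorem aux_small {n : ℕ} (hn : 0 < n) (x : ℝ) (d : ℤ) (h : x ^ n = d) (hx : |x| < 1) : x = 0 := by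
  have h1 : |x ^ n| < 1 := by
    rw [abs_pow]; exact pow_lt_one₀ (abs_nonneg _) hx hn.ne'
  rw [h] at h1
  have h2 : d = 0 := by
    rw [← Int.abs_lt_one_iff]; exact_mod_cast h1
  rw [h2] at h
  simpa [hn.ne'] using h

theorem aux_comm_zero {n : ℕ} (hodd : Odd n) (k l : Matrix (Fin n) (Fin n) ℝ)
    (hk : kᵀ * k = 1 ∧ k.det = 1) (hl : lᵀ * l = 1 ∧ l.det = 1) : (k * l - l * k).det = 0 := by
  -- with `u = k l`, `w = l k`: both special orthogonal
  have key : ∀ u w : Matrix (Fin n) (Fin n) ℝ, uᵀ * u = 1 → u.det = 1 → wᵀ * w = 1 → w.det = 1 →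
      (u - w).det = 0 := by
    intro u w hu du hw dw
    have hw' : w * wᵀ = 1 := mul_eq_one_comm.1 hw
    have e : uᵀ * (u - w) * wᵀ = -(u - w)ᵀ := by
      rw [mul_sub, hu, sub_mul, one_mul, mul_assoc, hw', mul_one, transpose_sub]
      abel
    have := congrArg Matrix.det e
    rw [det_mul, det_mul, det_transpose, det_transpose, du, dw, det_neg, det_transpose] at this
    simp [hodd.neg_one_pow] at this
    linarith
  apply key
  · rw [transpose_mul, mul_assoc, ← mul_assoc kᵀ, hk.1, one_mul, hl.1]
  · rw [det_mul, hk.2, hl.2, one_mul]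
  · rw [transpose_mul, mul_assoc, ← mul_assoc lᵀ, hl.1, one_mul, hk.1]
  · rw [det_mul, hk.2, hl.2, one_mul]

theorem aux_entry {n : ℕ} (k : Matrix (Fin n) (Fin n) ℝ) (hk : kᵀ * k = 1) (i j : Fin n) :
    |k i j| ≤ 1 := by
  have : k ∈ Matrix.unitaryGroup (Fin n) ℝ := by
    rw [Matrix.mem_unitaryGroup_iff']
    simpa [Matrix.star_eq_conjTranspose] using hk
  exact entry_norm_bound_of_unitary this i j

theorem aux_mul_bd {n : ℕ} (P Q : Matrix (Fin n) (Fin n) ℝ) (a b : ℝ) (ha0 : 0 ≤ a)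
    (ha : ∀ i j, |P i j| ≤ a) (hb : ∀ i j, |Q i j| ≤ b) (i j : Fin n) :
    |(P * Q) i j| ≤ n * (a * b) := by
  rw [Matrix.mul_apply]
  refine (Finset.abs_sum_le_sum_abs _ _).trans ?_
  refine (Finset.sum_le_card_nsmul _ _ (a * b) ?_).trans ?_
  · intro l _
    rw [abs_mul]
    exact mul_le_mul (ha _ _) (hb _ _) (abs_nonneg _) ha0
  · simp

theorem aux_comm_bd {n : ℕ} (hn : 0 < n) (hodd : Odd n) (k l P Q : Matrix (Fin n) (Fin n) ℝ)
    (hk : kᵀ * k = 1 ∧ k.det = 1) (hl : lᵀ * l = 1 ∧ l.det = 1) (δ : ℝ) (h0 : 0 < δ) (h1 : δ ≤ 1)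
    (hP : ∀ i j, |(P - k) i j| < δ) (hQ : ∀ i j, |(Q - l) i j| < δ) :
    |(P * Q - Q * P).det| ≤ n.factorial * (n * (8 * n) ^ n * (6 * n)) * δ := by
  have ek := aux_entry k hk.1
  have el := aux_entry l hl.1
  have hn1 : (1 : ℝ) ≤ n := by exact_mod_cast hn
  have eP : ∀ i j, |P i j| ≤ 2 := fun i j => by
    have a1 := hP i j; have a2 := ek i j
    rw [Matrix.sub_apply] at a1
    rw [abs_lt] at a1; rw [abs_le] at *; constructor <;> linarith
  have eQ : ∀ i j, |Q i j| ≤ 2 := fun i j => by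
    have a1 := hQ i j; have a2 := el i j
    rw [Matrix.sub_apply] at a1
    rw [abs_lt] at a1; rw [abs_le] at *; constructor <;> linarith
  have := aux_det (P * Q - Q * P) (k * l - l * k) (8 * n) (6 * n * δ) (by linarith)
    (by positivity) ?_ ?_ ?_
  · rw [aux_comm_zero hodd k l hk hl, sub_zero] at this
    refine this.trans (le_of_eq ?_)
    ring
  · intro i j
    have a1 := aux_mul_bd P Q 2 2 (by norm_num) eP eQ i j
    have a2 := aux_mul_bd Q P 2 2 (by norm_num) eQ eP i j
    rw [Matrix.sub_apply]
    refine (abs_sub _ _).trans ?_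
    linarith
  · intro i j
    have a1 := aux_mul_bd k l 1 1 (by norm_num) ek el i j
    have a2 := aux_mul_bd l k 1 1 (by norm_num) el ek i j
    rw [Matrix.sub_apply]
    refine (abs_sub _ _).trans ?_
    linarith
  · intro i j
    have b1 := aux_mul_bd P (Q - l) 2 δ (by norm_num) eP (fun i j => (hQ i j).le) i j
    have b2 := aux_mul_bd (P - k) l δ 1 h0.le (fun i j => (hP i j).le) el i j
    have b3 := aux_mul_bd Q (P - k) 2 δ (by norm_num) eQ (fun i j => (hP i j).le) i j
    have b4 := aux_mul_bd (Q - l) k δ 1 h0.le (fun i j => (hQ i j).le) ek i j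
    have e : (P * Q - Q * P) - (k * l - l * k) =
      P * (Q - l) + (P - k) * l - (Q * (P - k) + (Q - l) * k) := by noncomm_ring
    rw [← Matrix.sub_apply, e]
    simp only [Matrix.sub_apply (P * (Q - l) + (P - k) * l), Matrix.add_apply]
    rw [abs_le] at *
    constructor <;> linarith

theorem aux_scale {n : ℕ} (hn : 0 < n) (z : Matrix.GeneralLinearGroup (Fin n) ℝ)
    (X Y : Matrix (Fin n) (Fin n) ℝ) (a b : ℝ) :
    (((a • ((↑z⁻¹ : Matrix (Fin n) (Fin n) ℝ) * X * (↑z : Matrix (Fin n) (Fin n) ℝ))) *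
     (b • ((↑z⁻¹ : Matrix (Fin n) (Fin n) ℝ) * Y * (↑z : Matrix (Fin n) (Fin n) ℝ))) -
     (b • ((↑z⁻¹ : Matrix (Fin n) (Fin n) ℝ) * Y * (↑z : Matrix (Fin n) (Fin n) ℝ))) *
     (a • ((↑z⁻¹ : Matrix (Fin n) (Fin n) ℝ) * X * (↑z : Matrix (Fin n) (Fin n) ℝ)))).det
      = a ^ n * b ^ n * (X * Y - Y * X).det) := by
  have hz : (↑z : Matrix (Fin n) (Fin n) ℝ) * (↑z⁻¹ : Matrix (Fin n) (Fin n) ℝ) = 1 :=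
    Units.mul_inv z
  have hz' : (↑z⁻¹ : Matrix (Fin n) (Fin n) ℝ) * (↑z : Matrix (Fin n) (Fin n) ℝ) = 1 :=
    Units.inv_mul z
  generalize (↑z : Matrix (Fin n) (Fin n) ℝ) = Z at *
  generalize (↑z⁻¹ : Matrix (Fin n) (Fin n) ℝ) = W at *
  have h : ∀ X Y : Matrix (Fin n) (Fin n) ℝ, (W * X * Z) * (W * Y * Z) = W * (X * Y) * Z := by
    intro X Y
    calc _ = W * X * (Z * W) * Y * Z := by noncomm_ring
      _ = _ := by rw [hz]; noncomm_ring
  have e : (a • (W * X * Z)) * (b • (W * Y * Z)) - (b • (W * Y * Z)) * (a • (W * X * Z)) =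
      (a * b) • (W * (X * Y - Y * X) * Z) := by
    rw [smul_mul_smul_comm, smul_mul_smul_comm, h, h, mul_comm b a, ← smul_sub, mul_sub, sub_mul]
  have d : W.det * Z.det = 1 := by rw [← det_mul, hz', det_one]
  rw [e, det_smul, det_mul, det_mul, Fintype.card_fin, mul_pow]
  linear_combination (a ^ n * b ^ n * (X * Y - Y * X).det) * d

/-- For odd `n ≥ 3` and `ε > 0` there is `c > 0`, depending only on `n, ε`,
such that whenever `0 < δ ≤ c·L^(-2-ε)`, the `ℚ`-subalgebra of `A` generated by
`⋃_{1 ≤ m ≤ L} 𝒪(m; z, δ)` is commutative (hence a field). -/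
theorem stmt14 (n : ℕ) (hn : 3 ≤ n) (hodd : Odd n) (ε : ℝ) (hε : 0 < ε) :
    ∃ c : ℝ, 0 < c ∧
      ∀ (A : Type) [DivisionRing A] [CharZero A]
        (ι : A →ₐ[ℚ] Matrix (Fin n) (Fin n) ℝ),
        Function.Injective ι →
        Subalgebra.center ℚ A = ⊥ →
        Module.finrank ℚ A = n ^ 2 →
        ∀ O : Subring A, IsOrder A O →
        ∀ z : Matrix.GeneralLinearGroup (Fin n) ℝ,
        ∀ L : ℝ, 1 ≤ L →
        ∀ δ : ℝ, 0 < δ → δ ≤ c * L ^ (-2 - ε) →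
        ∀ x ∈ Algebra.adjoin ℚ (⋃ m ∈ {m : ℕ | 1 ≤ m ∧ (m : ℝ) ≤ L}, OSet ι O z m δ),
        ∀ y ∈ Algebra.adjoin ℚ (⋃ m ∈ {m : ℕ | 1 ≤ m ∧ (m : ℝ) ≤ L}, OSet ι O z m δ),
          x * y = y * x := by
  have hn0 : 0 < n := by omega
  have hn1 : (1 : ℝ) ≤ n := by exact_mod_cast hn0
  set K : ℝ := n.factorial * (n * (8 * n) ^ n * (6 * n)) with hK
  have hK1 : 1 ≤ K := by
    have f1 : (1 : ℝ) ≤ n.factorial := by exact_mod_cast Nat.factorial_pos n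
    have f2 : (1 : ℝ) ≤ (8 * n) ^ n := one_le_pow₀ (by linarith)
    exact one_le_mul_of_one_le_of_one_le f1
      (one_le_mul_of_one_le_of_one_le (one_le_mul_of_one_le_of_one_le hn1 f2) (by linarith))
  have hK0 : 0 < K := by linarith
  refine ⟨1 / (2 * K), by positivity, ?_⟩
  intro A _ _ ι hι hc hd O hO z L hL δ hδ hδL x hx y hy
  have hLe : L ^ (-2 - ε) * L ^ 2 ≤ 1 := by
    rw [← Real.rpow_natCast L 2, ← Real.rpow_add (by linarith)]
    apply Real.rpow_le_one_of_one_le_of_nonpos hL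
    push_cast; linarith
  have hLe' : L ^ (-2 - ε) ≤ 1 := Real.rpow_le_one_of_one_le_of_nonpos hL (by linarith)
  have hLp : 0 < L ^ (-2 - ε) := Real.rpow_pos_of_pos (by linarith) _
  have hδ1 : δ ≤ 1 := by
    refine hδL.trans (mul_le_one₀ ?_ hLp.le hLe')
    rw [div_le_one (by positivity)]; linarith
  have hcomm : ∀ g ∈ (⋃ m ∈ {m : ℕ | 1 ≤ m ∧ (m : ℝ) ≤ L}, OSet ι O z m δ),
      ∀ h ∈ (⋃ m ∈ {m : ℕ | 1 ≤ m ∧ (m : ℝ) ≤ L}, OSet ι O z m δ), g * h = h * g := by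
    intro g hg h hh
    simp only [Set.mem_iUnion, Set.mem_setOf_eq, exists_prop] at hg hh
    obtain ⟨m, ⟨hm1, hmL⟩, hgO, _, k, hk, hgk⟩ := hg
    obtain ⟨m', ⟨hm1', hmL'⟩, hhO, _, l, hl, hhl⟩ := hh
    have hb := aux_comm_bd hn0 hodd k l _ _ hk hl δ hδ hδ1 hgk hhl
    rw [aux_scale hn0] at hb
    have hpow : ∀ m : ℕ, 1 ≤ m → ((m : ℝ) ^ (-(1 : ℝ) / (n : ℝ))) ^ n = (m : ℝ)⁻¹ := by
      intro m hm
      rw [← Real.rpow_natCast, ← Real.rpow_mul (by positivity), div_mul_cancel₀ _ (by positivity),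
        Real.rpow_neg_one]
    rw [hpow m hm1, hpow m' hm1', ← hK] at hb
    have hmp : (0 : ℝ) < m := by exact_mod_cast hm1
    have hmp' : (0 : ℝ) < m' := by exact_mod_cast hm1'
    have e1 : (ι g * ι h - ι h * ι g) = ι (g * h - h * g) := by simp
    rw [e1] at hb
    have hlt : |(ι (g * h - h * g)).det| < 1 := by
      rw [abs_mul, abs_of_pos (by positivity), ← mul_inv, inv_mul_le_iff₀ (by positivity)] at hb
      have hmm : (m : ℝ) * m' ≤ L ^ 2 := by
        rw [sq]; exact mul_le_mul hmL hmL' hmp'.le (by linarith)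
      calc _ ≤ (m : ℝ) * m' * (K * δ) := hb
        _ ≤ L ^ 2 * (K * (1 / (2 * K) * L ^ (-2 - ε))) := by gcongr
        _ = (L ^ (-2 - ε) * L ^ 2) / 2 := by field_simp
        _ < 1 := by linarith
    obtain ⟨d, hd'⟩ := aux_int ι hn0 hc hd O hO (g * h - h * g)
      (O.sub_mem (O.mul_mem hgO hhO) (O.mul_mem hhO hgO))
    have hz := aux_small hn0 _ d hd' hlt
    by_contra hne
    have hu : IsUnit (g * h - h * g) := IsUnit.mk0 _ (sub_ne_zero.2 hne)
    have := (Matrix.isUnit_iff_isUnit_det _).1 (hu.map ι)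
    rw [hz] at this
    simp at this
  have := Algebra.isMulCommutative_adjoin ℚ hcomm
  exact congrArg Subtype.val (this.is_comm.comm (⟨x, hx⟩ : Algebra.adjoin ℚ _) ⟨y, hy⟩)
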